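/- arXiv:1902.00102 — 3 statements merged into one kernel-verified Lean document; each statement's English description precedes it below -/
import Mathlib

section
/- Let k ≥ 3 and let n₁, …, n_k be elements of a commutative ring. Let C be the k×k 'cycle' matrix with diagonal entries C_{ii} = n_i, entries C_{ij} = −1 whenever the indices i and j are adjacent in the cycle ℤ/kℤ (i.e. j ≡ i ± 1 mod k, including the corner entries C_{1k} = C_{k1} = −1), and all other entries 0. Then det C = n₁ · |n₂, …, n_k| − |n₃, …, n_k| − |n₂, …, n_{k−1}| − 2. -/
/-- The symmetric tridiagonal matrix with diagonal entries given by the list `L`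
and `-1` immediately above and below the diagonal. -/
def triMat {R : Type*} [CommRing R] (L : List R) :
    Matrix (Fin L.length) (Fin L.length) R :=
  Matrix.of fun i j =>
    if (i : ℕ) = (j : ℕ) then L.get i
    else if (i : ℕ) + 1 = (j : ℕ) ∨ (j : ℕ) + 1 = (i : ℕ) then -1 else 0

/-- The tridiagonal determinant `|n₁, …, n_k|`; the determinant of the empty list is `1`. -/
def tridet {R : Type*} [CommRing R] (L : List R) : R := (triMat L).det

/-- The "cycle" matrix with diagonal entries given by the list `L` and entries `-1`
between cyclically adjacent indices (indices adjacent in `ℤ/kℤ`). -/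
def cycMat {R : Type*} [CommRing R] (L : List R) :
    Matrix (Fin L.length) (Fin L.length) R :=
  Matrix.of fun i j =>
    if (i : ℕ) = (j : ℕ) then L.get i
    else if ((i : ℕ) + 1) % L.length = (j : ℕ) ∨ ((j : ℕ) + 1) % L.length = (i : ℕ)
      then -1 else 0

/-!
Removing vertex `1` turns the cycle into the path on `n₂, …, n_k`, with tridiagonal matrix `A`, so
the cycle matrix is `A` bordered by a row and a column supported on the two ends of that path.
Cauchy's formula for a bordered determinant,
`det [[a, u], [v, A]] = a * det A - u ⬝ᵥ adjugate A *ᵥ v`, then involves only the four corner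
entries of `adjugate A`. The two diagonal corners are the path determinants with one end removed.
The two off-diagonal corners are, up to sign, determinants of triangular matrices with diagonal
`-1`, hence equal to `1`; they contribute the constant `-2`.
-/

section BorderedDeterminant

open Matrix

variable {R : Type*} [CommRing R] {n : ℕ}

theorem det_submatrix_succ_succAbove_succ
    (M : Matrix (Fin (n + 1)) (Fin (n + 1)) R) (j : Fin n) :
    (M.submatrix Fin.succ j.succ.succAbove).det =
      (-1) ^ (j : ℕ) * cramer (M.submatrix Fin.succ Fin.succ) (fun i ↦ M i.succ 0) j := by
  obtain _ | n := n
  · exact j.elim0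
  rw [det_succ_column_zero, cramer_apply, det_succ_column _ j, Finset.mul_sum]
  refine Finset.sum_congr rfl fun i _ ↦ ?_
  have h_sign : (-1 : R) ^ (j : ℕ) * (-1) ^ (i + j : ℕ) = (-1) ^ (i : ℕ) := by
    rw [pow_add, mul_left_comm, ← mul_pow]
    simp
  rw [submatrix_updateCol_succAbove, updateCol_self, ← mul_assoc, ← mul_assoc, h_sign]
  simp [submatrix_submatrix, Function.comp_def]

theorem det_succ_eq_sub_dotProduct_adjugate_mulVec
    (M : Matrix (Fin (n + 1)) (Fin (n + 1)) R) :
    M.det = M 0 0 * (M.submatrix Fin.succ Fin.succ).det -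
      (fun j ↦ M 0 j.succ) ⬝ᵥ (M.submatrix Fin.succ Fin.succ).adjugate *ᵥ fun i ↦ M i.succ 0 := by
  have h_term (j : Fin n) : (-1) ^ (j.succ : ℕ) * M 0 j.succ *
      (M.submatrix Fin.succ j.succ.succAbove).det =
        -(M 0 j.succ * cramer (M.submatrix Fin.succ Fin.succ) (fun i ↦ M i.succ 0) j) := by
    have h_sign : (-1 : R) ^ (j : ℕ) * (-1) ^ (j : ℕ) = 1 := by simp [← mul_pow]
    rw [det_submatrix_succ_succAbove_succ, Fin.val_succ, pow_succ]
    linear_combination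
      -(M 0 j.succ * cramer (M.submatrix Fin.succ Fin.succ) (fun i ↦ M i.succ 0) j) * h_sign
  rw [det_succ_row_zero, Fin.sum_univ_succ, Fintype.sum_congr _ _ h_term,
    ← cramer_eq_adjugate_mulVec]
  simp [dotProduct, sub_eq_add_neg]

theorem det_succ_of_border_eq_single_add_single
    (M : Matrix (Fin (n + 1)) (Fin (n + 1)) R) (p q : Fin n) (a b c d : R)
    (h_row : ∀ j, M 0 j.succ = (Pi.single p a + Pi.single q b : Fin n → R) j)
    (h_col : ∀ i, M i.succ 0 = (Pi.single p c + Pi.single q d : Fin n → R) i) :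
    M.det = M 0 0 * (M.submatrix Fin.succ Fin.succ).det -
      (a * c * (M.submatrix Fin.succ Fin.succ).adjugate p p +
        a * d * (M.submatrix Fin.succ Fin.succ).adjugate p q +
        b * c * (M.submatrix Fin.succ Fin.succ).adjugate q p +
        b * d * (M.submatrix Fin.succ Fin.succ).adjugate q q) := by
  rw [det_succ_eq_sub_dotProduct_adjugate_mulVec, funext h_row, funext h_col]
  simp only [add_dotProduct, single_dotProduct, mulVec_add, mulVec_single, Pi.add_apply,
    Pi.smul_apply, col_apply, op_smul_eq_mul]
  ring

end BorderedDeterminant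

section CornerCofactors

open Matrix

variable {R : Type*} [CommRing R] {m : ℕ} (A : Matrix (Fin (m + 1)) (Fin (m + 1)) R)

theorem adjugate_zero_zero_eq_det_submatrix_succ :
    A.adjugate 0 0 = (A.submatrix Fin.succ Fin.succ).det := by
  simp [adjugate_fin_succ_eq_det_submatrix]

theorem adjugate_last_last_eq_det_submatrix_castSucc :
    A.adjugate (Fin.last m) (Fin.last m) = (A.submatrix Fin.castSucc Fin.castSucc).det := by
  simp [adjugate_fin_succ_eq_det_submatrix]

variable {A}

theorem adjugate_zero_last_of_lowerHessenberg
    (hA : ∀ i j : Fin (m + 1), (i : ℕ) + 1 < j → A i j = 0) :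
    A.adjugate 0 (Fin.last m) = (-1) ^ m * ∏ i : Fin m, A i.castSucc i.succ := by
  have h_lower : (A.submatrix Fin.castSucc Fin.succ).IsLowerTriangular :=
    fun i j (hij : i < j) ↦ hA _ _ (by simpa using hij)
  rw [adjugate_fin_succ_eq_det_submatrix, Fin.succAbove_last, Fin.succAbove_zero,
    det_of_isLowerTriangular _ h_lower]
  simp

end CornerCofactors

section TridiagonalAndCycle

open Matrix

variable {R : Type*} [CommRing R]

theorem triMat_isSymm (L : List R) : (triMat L).IsSymm := by
  ext i j
  obtain rfl | hij := eq_or_ne i j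
  · rfl
  · simp [triMat, Fin.val_inj, hij, hij.symm, or_comm]

theorem triMat_cons_submatrix_succ (a : R) (L : List R) :
    (triMat (a :: L)).submatrix Fin.succ Fin.succ = triMat L := by
  ext i j
  simp [triMat]

theorem adjugate_triMat_zero_zero (a : R) (L : List R) :
    (triMat (a :: L)).adjugate 0 0 = tridet L :=
  (adjugate_zero_zero_eq_det_submatrix_succ (m := L.length) _).trans
    (congrArg det (triMat_cons_submatrix_succ a L))

theorem adjugate_triMat_last_last (a : R) (L : List R) :
    (triMat (a :: L)).adjugate (Fin.last L.length) (Fin.last L.length) =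
      tridet (a :: L).dropLast := by
  have h_length : (a :: L).dropLast.length = L.length := by simp
  refine (adjugate_last_last_eq_det_submatrix_castSucc (m := L.length) _).trans ?_
  rw [tridet, ← det_submatrix_equiv_self (finCongr h_length)]
  congr 1
  ext i j
  simp [triMat]

theorem adjugate_triMat_zero_last (a : R) (L : List R) :
    (triMat (a :: L)).adjugate 0 (Fin.last L.length) = 1 := by
  have h_super (i : Fin L.length) : triMat (a :: L) i.castSucc i.succ = -1 := by simp [triMat]
  rw [adjugate_zero_last_of_lowerHessenberg (m := L.length)]
  · simp [h_super, ← mul_pow]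
  · intro i j hij
    simp only [triMat, of_apply]
    rw [if_neg (by omega), if_neg (by omega)]

theorem adjugate_triMat_last_zero (a : R) (L : List R) :
    (triMat (a :: L)).adjugate (Fin.last L.length) 0 = 1 :=
  ((triMat_isSymm _).adjugate.apply _ _).trans (adjugate_triMat_zero_last a L)

theorem fin_val_add_one_mod_eq_val_iff {n : ℕ} (i j : Fin n) :
    ((i : ℕ) + 1) % n = j ↔ (i : ℕ) + 1 = j ∨ (i : ℕ) + 1 = n ∧ (j : ℕ) = 0 := by
  obtain h_lt | h_eq : (i : ℕ) + 1 < n ∨ (i : ℕ) + 1 = n := by omega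
  · rw [Nat.mod_eq_of_lt h_lt]
    omega
  · rw [h_eq, Nat.mod_self]
    omega

theorem cycMat_isSymm (L : List R) : (cycMat L).IsSymm := by
  ext i j
  obtain rfl | hij := eq_or_ne i j
  · rfl
  · simp [cycMat, Fin.val_inj, hij, hij.symm, or_comm]

theorem cycMat_cons_zero_zero (a : R) (L : List R) : cycMat (a :: L) 0 0 = a := by
  simp [cycMat]

theorem cycMat_cons_submatrix_succ (a : R) (L : List R) :
    (cycMat (a :: L)).submatrix Fin.succ Fin.succ = triMat L := by
  ext i j
  simp only [submatrix_apply, cycMat, triMat, of_apply, fin_val_add_one_mod_eq_val_iff]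
  simp

theorem cycMat_cons_cons_zero_succ (a b : R) {L : List R} (hL : L ≠ [])
    (j : Fin (L.length + 1)) :
    cycMat (a :: b :: L) 0 j.succ =
      (Pi.single 0 (-1) + Pi.single (Fin.last L.length) (-1) : Fin (L.length + 1) → R) j := by
  have h_ne : Fin.last L.length ≠ 0 := by simpa [Fin.ext_iff] using hL
  simp only [cycMat, of_apply, fin_val_add_one_mod_eq_val_iff, Pi.add_apply]
  obtain rfl | h_first := eq_or_ne j 0
  · simp [h_ne]
  obtain rfl | h_last := eq_or_ne j (Fin.last L.length)
  · simp [h_ne]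
  have h_last_val : (j : ℕ) ≠ L.length := by simpa [Fin.ext_iff] using h_last
  simp [h_first, h_last, h_last_val]

theorem cycMat_cons_cons_succ_zero (a b : R) {L : List R} (hL : L ≠ [])
    (i : Fin (L.length + 1)) :
    cycMat (a :: b :: L) i.succ 0 =
      (Pi.single 0 (-1) + Pi.single (Fin.last L.length) (-1) : Fin (L.length + 1) → R) i :=
  ((cycMat_isSymm (a :: b :: L)).apply _ _).trans (cycMat_cons_cons_zero_succ a b hL i)

end TridiagonalAndCycle

/-- Determinant of a cycle:
`|n₁, …, n_k, ⟲| = n₁ · |n₂, …, n_k| − |n₃, …, n_k| − |n₂, …, n_{k−1}| − 2` for `k ≥ 3`. -/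
theorem det_cycle {R : Type*} [CommRing R] (n₁ : R) (l : List R) (hl : 2 ≤ l.length) :
    (cycMat (n₁ :: l)).det
      = n₁ * tridet l - tridet l.tail - tridet l.dropLast - 2 := by
  obtain _ | ⟨n₂, L⟩ := l
  · simp at hl
  have hL : L ≠ [] := by
    rintro rfl
    simp at hl
  have h_det := det_succ_of_border_eq_single_add_single (n := L.length + 1)
    (cycMat (n₁ :: n₂ :: L)) 0 (Fin.last L.length) (-1) (-1) (-1) (-1)
    (cycMat_cons_cons_zero_succ n₁ n₂ hL) (cycMat_cons_cons_succ_zero n₁ n₂ hL)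
  rw [cycMat_cons_zero_zero n₁ (n₂ :: L), cycMat_cons_submatrix_succ n₁ (n₂ :: L),
    adjugate_triMat_zero_zero, adjugate_triMat_zero_last, adjugate_triMat_last_zero,
    adjugate_triMat_last_last, ← tridet] at h_det
  rw [List.tail_cons]
  exact h_det.trans (by ring)
end

section
/- Let R be a commutative ring, let A be a square matrix over R indexed by a finite type V, let v ∈ V, and let m ≥ 1 be an integer. Let B be the matrix indexed by Fin(m−1) ⊕ V obtained by attaching a chain of (m−1) vertices marked 2 to the vertex v: B has diagonal entries 2 on the Fin(m−1) part, entries −1 between consecutive chain vertices, entries −1 (in both symmetric positions) between the last chain vertex and v, and agrees with A on the V×V block, with all other entries 0. Let A′ be the matrix indexed by Unit ⊕ V whose new vertex has diagonal entry −m, with entries −1 (in both symmetric positions) between the new vertex and v, whose (v,v) entry equals A(v,v) − 1, and which otherwise agrees with A. Then det B = m · det A − (m−1) · det(A with row and column v deleted), and det B = −det A′. -/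
/-- The matrix obtained from `A` by attaching a chain of `m - 1` vertices marked `2`
to the vertex `v`: the chain vertices have diagonal entries `2`, consecutive chain
vertices are joined by `-1`, and the last chain vertex (index `m - 2`) is joined
to `v` by `-1`. -/
def attachTwos {R : Type*} [CommRing R] {V : Type*} [DecidableEq V]
    (A : Matrix V V R) (v : V) (m : ℕ) :
    Matrix (Fin (m - 1) ⊕ V) (Fin (m - 1) ⊕ V) R :=
  Matrix.of fun x y =>
    match x, y with
    | .inl i, .inl j =>
        if (i : ℕ) = (j : ℕ) then 2
        else if (i : ℕ) + 1 = (j : ℕ) ∨ (j : ℕ) + 1 = (i : ℕ) then -1 else 0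
    | .inl i, .inr w => if (i : ℕ) + 2 = m ∧ w = v then -1 else 0
    | .inr w, .inl j => if (j : ℕ) + 2 = m ∧ w = v then -1 else 0
    | .inr w, .inr w' => A w w'

/-- The matrix obtained from `A` by adding one new vertex with mark `-m` joined to `v`
by `-1`, and decreasing the mark of `v` by `1`. -/
def addNegVertex {R : Type*} [CommRing R] {V : Type*} [DecidableEq V]
    (A : Matrix V V R) (v : V) (m : ℕ) :
    Matrix (Unit ⊕ V) (Unit ⊕ V) R :=
  Matrix.of fun x y =>
    match x, y with
    | .inl _, .inl _ => -(m : R)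
    | .inl _, .inr w => if w = v then -1 else 0
    | .inr w, .inl _ => if w = v then -1 else 0
    | .inr w, .inr w' => if w = v ∧ w' = v then A v v - 1 else A w w'

/-!
Write `B` for `attachTwos A v m`. The chain is attached one vertex at a time, starting at `v`, and
each step borders the matrix by one row and one column. By Cauchy's formula for the determinant of a
bordered matrix, the step sends the pair `(det A, minor)`, with the principal minor taken at the
vertex of attachment, to `(2 * det A - minor, det A)`. This linear recurrence is solved by
`det B = m * det A - (m - 1) * minor`. Bordering once by a vertex of mark `-m`, after lowering the
mark of `v` by one, gives the same value up to sign.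
-/

section

open Matrix

variable {R V : Type*} [CommRing R]

section Determinant

variable [Fintype V] [DecidableEq V]

theorem det_add_single (A : Matrix V V R) (i j : V) (c : R) :
    (A + single i j c).det = A.det + c * A.adjugate j i := by
  have h : A + single i j c = A.updateRow i (A i + c • Pi.single j 1) := by
    ext k l
    obtain rfl | hk := eq_or_ne k i
    · simp [single_apply, Pi.single_apply, eq_comm]
    · simp [hk, hk.symm]
  rw [h, det_updateRow_add, det_updateRow_smul, updateRow_eq_self, adjugate_apply]

theorem adjugate_add_single_apply (A : Matrix V V R) (i j k : V) (c : R) :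
    (A + single i j c).adjugate k i = A.adjugate k i := by
  have h : (A + single i j c).updateRow i (Pi.single k 1) = A.updateRow i (Pi.single k 1) := by
    ext l n
    obtain rfl | hl := eq_or_ne l i
    · simp
    · simp [hl, hl.symm]
  rw [adjugate_apply, adjugate_apply, h]

theorem adjugate_inl_inl {ι : Type*} [Fintype ι] [DecidableEq ι] [Subsingleton ι]
    (M : Matrix (ι ⊕ V) (ι ⊕ V) R) (i : ι) :
    M.adjugate (.inl i) (.inl i) = M.toBlocks₂₂.det := by
  have h : M.updateRow (.inl i) (Pi.single (.inl i) 1) =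
      fromBlocks 1 0 M.toBlocks₂₁ M.toBlocks₂₂ := by
    ext (k | k) (l | l)
    · obtain rfl := Subsingleton.elim i k
      obtain rfl := Subsingleton.elim i l
      simp
    · obtain rfl := Subsingleton.elim i k
      simp
    · simp [toBlocks₂₁]
    · simp [toBlocks₂₂]
  rw [adjugate_apply, h, det_fromBlocks_zero₁₂, det_one, one_mul]

theorem adjugate_apply_self_eq_det_submatrix (A : Matrix V V R) (v : V) :
    A.adjugate v v = (A.submatrix (Subtype.val : {w // w ≠ v} → V) Subtype.val).det :=
  calc
    A.adjugate v v =
        (A.submatrix (Equiv.sumCompl (· = v)) (Equiv.sumCompl (· = v))).adjugate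
          (.inl ⟨v, rfl⟩) (.inl ⟨v, rfl⟩) := by
      rw [adjugate_submatrix_equiv_self]
      rfl
    _ = _ := adjugate_inl_inl ..

theorem adjugate_fromBlocks_inr_inl (A : Matrix V V R) (c : Matrix Unit Unit R)
    (B : Matrix Unit V R) (u : V → R) (j : V) :
    (fromBlocks c B (replicateCol Unit u) A).adjugate (.inr j) (.inl ()) =
      -(A.adjugate *ᵥ u) j := by
  set M := (fromBlocks c B (replicateCol Unit u) A).updateRow (.inl ()) (Pi.single (.inr j) 1)
    with hM
  have h_swap : M.submatrix id (Equiv.swap (.inl ()) (.inr j)) =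
      fromBlocks 1 0 (replicateCol Unit fun i => A i j) (A.updateCol j u) := by
    ext (i | i) (k | k)
    · simp [hM]
    · obtain rfl | hk := eq_or_ne k j <;> simp [Equiv.swap_apply_of_ne_of_ne, *]
    · simp [hM]
    · obtain rfl | hk := eq_or_ne k j <;> simp [Equiv.swap_apply_of_ne_of_ne, *]
  have h_det := det_permute' (Equiv.swap (.inl ()) (.inr j)) M
  rw [h_swap, det_fromBlocks_zero₁₂, det_one, one_mul, Equiv.Perm.sign_swap Sum.inl_ne_inr] at h_det
  rw [adjugate_apply, ← cramer_eq_adjugate_mulVec, cramer_apply, h_det]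
  simp [hM]

theorem det_fromBlocks_replicateRow_replicateCol (A : Matrix V V R) (c : R) (w u : V → R) :
    (fromBlocks (of fun _ _ : Unit => c) (replicateRow Unit w) (replicateCol Unit u) A).det =
      c * A.det - w ⬝ᵥ A.adjugate *ᵥ u := by
  rw [det_eq_sum_mul_adjugate_row _ (.inl ())]
  simp [adjugate_inl_inl, adjugate_fromBlocks_inr_inl, dotProduct, sub_eq_add_neg]

end Determinant

/-- The chain `Fin (n + 1)` as a chain `Fin n` followed by a vertex `()`, the one joined to the
original graph `V`. -/
def chainSuccEquiv (n : ℕ) (V : Type*) : Fin n ⊕ (Unit ⊕ V) ≃ Fin (n + 1) ⊕ V :=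
  (Equiv.sumAssoc (Fin n) Unit V).symm.trans
    ((finSuccEquivLast.trans (Equiv.optionEquivSumPUnit (Fin n))).symm.sumCongr (Equiv.refl V))

@[simp]
theorem chainSuccEquiv_inl (n : ℕ) (i : Fin n) :
    chainSuccEquiv n V (.inl i) = .inl i.castSucc := by
  simp [chainSuccEquiv]

@[simp]
theorem chainSuccEquiv_inr_inl (n : ℕ) (u : Unit) :
    chainSuccEquiv n V (.inr (.inl u)) = .inl (Fin.last n) := by
  simp [chainSuccEquiv]

@[simp]
theorem chainSuccEquiv_inr_inr (n : ℕ) (w : V) :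
    chainSuccEquiv n V (.inr (.inr w)) = .inr w :=
  rfl

variable [DecidableEq V]

/-- The matrix of the marked graph obtained from that of `A` by joining a new vertex marked `c` to
the vertex `v`. -/
def attachVertex (A : Matrix V V R) (v : V) (c : R) : Matrix (Unit ⊕ V) (Unit ⊕ V) R :=
  fromBlocks (of fun _ _ => c) (replicateRow Unit (Pi.single v (-1)))
    (replicateCol Unit (Pi.single v (-1))) A

theorem det_attachVertex [Fintype V] (A : Matrix V V R) (v : V) (c : R) :
    (attachVertex A v c).det = c * A.det - A.adjugate v v := by
  simp [attachVertex, det_fromBlocks_replicateRow_replicateCol]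

theorem adjugate_attachVertex_inl_inl [Fintype V] (A : Matrix V V R) (v : V) (c : R) :
    (attachVertex A v c).adjugate (.inl ()) (.inl ()) = A.det :=
  adjugate_inl_inl ..

theorem attachTwos_submatrix_chainSuccEquiv (A : Matrix V V R) (v : V) (n : ℕ) :
    (attachTwos A v (n + 2)).submatrix (chainSuccEquiv n V) (chainSuccEquiv n V) =
      attachTwos (attachVertex A v 2) (.inl ()) (n + 1) := by
  have h_ne (i : Fin n) : (i : ℕ) ≠ n := i.isLt.ne
  have h_ne' (i : Fin n) : n ≠ i := i.isLt.ne'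
  have h_succ_ne (i : Fin n) : n + 1 ≠ i := by lia
  ext (i | i | i) (j | j | j) <;>
    simp [attachTwos, attachVertex, Pi.single_apply, h_ne, h_ne', h_succ_ne]

theorem det_attachTwos_one [Fintype V] (A : Matrix V V R) (v : V) :
    (attachTwos A v 1).det = A.det :=
  (det_submatrix_equiv_self (Equiv.emptySum (Fin 0) V).symm (attachTwos A v 1)).symm

theorem det_attachTwos_add_two [Fintype V] (A : Matrix V V R) (v : V) (n : ℕ) :
    (attachTwos A v (n + 2)).det = (attachTwos (attachVertex A v 2) (.inl ()) (n + 1)).det := by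
  rw [← attachTwos_submatrix_chainSuccEquiv]
  exact (det_submatrix_equiv_self (chainSuccEquiv n V) (attachTwos A v (n + 2))).symm

theorem det_attachTwos_add_one [Fintype V] (A : Matrix V V R) (v : V) (n : ℕ) :
    (attachTwos A v (n + 1)).det = (n + 1) * A.det - n * A.adjugate v v := by
  induction n generalizing V with
  | zero => simpa using det_attachTwos_one A v
  | succ n ih =>
    rw [det_attachTwos_add_two, ih, det_attachVertex, adjugate_attachVertex_inl_inl]
    push_cast
    ring

theorem addNegVertex_eq_attachVertex (A : Matrix V V R) (v : V) (m : ℕ) :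
    addNegVertex A v m = attachVertex (A + single v v (-1)) v (-(m : R)) := by
  ext (i | i) (j | j)
  · rfl
  · simp [addNegVertex, attachVertex, Pi.single_apply]
  · simp [addNegVertex, attachVertex, Pi.single_apply]
  · by_cases h : i = v ∧ j = v
    · obtain ⟨rfl, rfl⟩ := h
      simp [addNegVertex, attachVertex, sub_eq_add_neg]
    · have h' : ¬(v = i ∧ v = j) := by rwa [eq_comm, @eq_comm _ v]
      simp [addNegVertex, attachVertex, h, h']

theorem det_addNegVertex [Fintype V] (A : Matrix V V R) (v : V) (m : ℕ) :
    (addNegVertex A v m).det = -(m * A.det - (m - 1) * A.adjugate v v) := by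
  rw [addNegVertex_eq_attachVertex, det_attachVertex, det_add_single, adjugate_add_single_apply]
  ring

end

/-- Attaching a chain `[2, …, 2]` of `m − 1` twos to the vertex `v` of a marked graph:
`det B = m · det A − (m − 1) · det (A ∖ v)`, and `det B = − det A′` where `A′` is obtained
by adding a single vertex marked `−m` and replacing the mark `n` of `v` by `n − 1`. -/
theorem det_attach_twos {R : Type*} [CommRing R] {V : Type*} [Fintype V] [DecidableEq V]
    (A : Matrix V V R) (v : V) (m : ℕ) (hm : 1 ≤ m) :
    (attachTwos A v m).det
        = (m : R) * A.det
          - ((m : R) - 1) *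
            (A.submatrix (fun i : {w : V // w ≠ v} => (i : V))
              (fun i : {w : V // w ≠ v} => (i : V))).det
      ∧ (attachTwos A v m).det = -(addNegVertex A v m).det := by
  obtain ⟨n, rfl⟩ := Nat.exists_eq_add_of_le' hm
  have h_det : (attachTwos A v (n + 1)).det =
      ((n + 1 : ℕ) : R) * A.det - (((n + 1 : ℕ) : R) - 1) * A.adjugate v v := by
    rw [det_attachTwos_add_one]
    simp
  rw [← adjugate_apply_self_eq_det_submatrix, det_addNegVertex, neg_neg]
  exact ⟨h_det, h_det⟩
end

section
/- Let R be a commutative ring, let A be a square matrix over R indexed by a finite type V, let v ∈ V, and let c = [c₁, …, c_k] and c′ = [c′₁, …, c′_l] (k, l ≥ 1) be two lists of elements of R. Let G be the matrix indexed by Fin(k−1) ⊕ V ⊕ Fin(l−1) obtained by grafting both chains c and c′ onto the same vertex v: G agrees with A on the V×V block except that G(v,v) = A(v,v) + c₁ + c′₁; the vertices of the first added chain carry diagonal entries c₂, …, c_k and those of the second carry c′₂, …, c′_l; there are entries −1 (in both symmetric positions) between v and the vertex carrying c₂, between v and the vertex carrying c′₂, and between consecutive vertices within each added chain; all other entries are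 0. Then det G = |c₂,…,c_k| · |c′₂,…,c′_l| · det A + ( |c₁,…,c_k| · |c′₂,…,c′_l| + |c′₁,…,c′_l| · |c₂,…,c_k| ) · det(A with row and column v deleted). -/
/-- The matrix obtained from `A` by grafting the two chains `c₁ :: rest` and
`c₁' :: rest'` onto the same vertex `v`: the diagonal entry at `v` becomes
`A v v + c₁ + c₁'`, the added vertices of the two chains carry the diagonal entries
from `rest` and `rest'` respectively, `v` is joined by `-1` to the first vertex of
each chain, consecutive vertices within each chain are joined by `-1`, and all other
new entries (in particular between the two chains) vanish. -/
def graftTwoChains {R : Type*} [CommRing R] {V : Type*} [DecidableEq V]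
    (A : Matrix V V R) (v : V) (c₁ : R) (rest : List R) (c₁' : R) (rest' : List R) :
    Matrix (Fin rest.length ⊕ V ⊕ Fin rest'.length)
      (Fin rest.length ⊕ V ⊕ Fin rest'.length) R :=
  Matrix.of fun x y =>
    match x, y with
    | .inl i, .inl j =>
        if (i : ℕ) = (j : ℕ) then rest.get i
        else if (i : ℕ) + 1 = (j : ℕ) ∨ (j : ℕ) + 1 = (i : ℕ) then -1 else 0
    | .inl i, .inr (.inl w) => if w = v ∧ (i : ℕ) = 0 then -1 else 0
    | .inr (.inl w), .inl i => if w = v ∧ (i : ℕ) = 0 then -1 else 0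
    | .inr (.inl w), .inr (.inl w') =>
        if w = v ∧ w' = v then A v v + c₁ + c₁' else A w w'
    | .inr (.inl w), .inr (.inr j) => if w = v ∧ (j : ℕ) = 0 then -1 else 0
    | .inr (.inr i), .inr (.inl w) => if w = v ∧ (i : ℕ) = 0 then -1 else 0
    | .inr (.inr i), .inr (.inr j) =>
        if (i : ℕ) = (j : ℕ) then rest'.get i
        else if (i : ℕ) + 1 = (j : ℕ) ∨ (j : ℕ) + 1 = (i : ℕ) then -1 else 0
    | .inl _, .inr (.inr _) => 0
    | .inr (.inr _), .inl _ => 0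

/-!
Write `M°` for a matrix with the row and column of its root deleted. Identify the roots of `A` and
`B` and add the two diagonal entries there. The row of the common root is then the sum of the root
row of `A` and that of `B`, each padded by zeros. Keeping only the former makes the matrix block
triangular with diagonal blocks `A` and `B°`; keeping only the latter gives the blocks `A°` and `B`.
Hence the determinant is `det A * det B° + det A° * det B`. The two-hair graft is such a gluing of
the two chains `c` and `c'`, rooted at their first vertices, to `A` rooted at `v`.
-/

open Matrix

/-- A sum `m ⊕ n` with an extra root is the sum of the rooted `m` and `n`; this exposes the block
structure of a coalescence. -/
def optionSumEquiv (m n : Type*) : Option (m ⊕ n) ≃ Option m ⊕ n where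
  toFun
    | none => .inl none
    | some (.inl i) => .inl (some i)
    | some (.inr j) => .inr j
  invFun
    | .inl none => none
    | .inl (some i) => some (.inl i)
    | .inr j => some (.inr j)
  left_inv := by rintro (_ | _ | _) <;> rfl
  right_inv := by rintro ((_ | _) | _) <;> rfl

/-- The gluing of two weighted graphs, given by their matrices, at a common root. A rooted vertex
set is encoded as `Option m`, with root `none`; the diagonal entries at the two roots add up. -/
def coalescence {R m n : Type*} [Add R] [Zero R] (A : Matrix (Option m) (Option m) R)
    (B : Matrix (Option n) (Option n) R) : Matrix (Option (m ⊕ n)) (Option (m ⊕ n)) R :=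
  of fun
    | none, none => A none none + B none none
    | none, some (.inl j) => A none (some j)
    | none, some (.inr j) => B none (some j)
    | some (.inl i), none => A (some i) none
    | some (.inr i), none => B (some i) none
    | some (.inl i), some (.inl j) => A (some i) (some j)
    | some (.inr i), some (.inr j) => B (some i) (some j)
    | some (.inl _), some (.inr _) => 0
    | some (.inr _), some (.inl _) => 0

section Coalescence

variable {R m n : Type*}

theorem coalescence_submatrix_some [Add R] [Zero R] (A : Matrix (Option m) (Option m) R)
    (B : Matrix (Option n) (Option n) R) :
    (coalescence A B).submatrix some some =
      fromBlocks (A.submatrix some some) 0 0 (B.submatrix some some) := by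
  ext (_ | _) (_ | _) <;> rfl

theorem coalescence_submatrix_sumComm [AddCommMagma R] [Zero R] (A : Matrix (Option m) (Option m) R)
    (B : Matrix (Option n) (Option n) R) :
    (coalescence A B).submatrix (Equiv.sumComm n m).optionCongr (Equiv.sumComm n m).optionCongr =
      coalescence B A := by
  ext (_ | _ | _) (_ | _ | _) <;> simp [coalescence, add_comm]

theorem coalescence_updateRow_none_zero_submatrix [DecidableEq n] [AddZeroClass R]
    (A : Matrix (Option m) (Option m) R) (B : Matrix (Option n) (Option n) R) :
    (coalescence A (B.updateRow none 0)).submatrix (optionSumEquiv m n).symm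
        (optionSumEquiv m n).symm =
      fromBlocks A 0 (of fun i j => j.elim (B (some i) none) 0) (B.submatrix some some) := by
  ext ((_ | _) | _) ((_ | _) | _) <;> simp [coalescence, optionSumEquiv]

variable [CommRing R] [Fintype m] [DecidableEq m] [Fintype n] [DecidableEq n]

theorem det_coalescence_comm (A : Matrix (Option m) (Option m) R)
    (B : Matrix (Option n) (Option n) R) : (coalescence A B).det = (coalescence B A).det := by
  rw [← coalescence_submatrix_sumComm A B, det_submatrix_equiv_self]

theorem det_coalescence_updateRow_none_zero (A : Matrix (Option m) (Option m) R)
    (B : Matrix (Option n) (Option n) R) :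
    (coalescence A (B.updateRow none 0)).det = A.det * (B.submatrix some some).det := by
  rw [← det_submatrix_equiv_self (optionSumEquiv m n).symm,
    coalescence_updateRow_none_zero_submatrix, det_fromBlocks_zero₁₂]

theorem det_coalescence_eq_add_updateRow_none_zero (A : Matrix (Option m) (Option m) R)
    (B : Matrix (Option n) (Option n) R) :
    (coalescence A B).det = (coalescence A (B.updateRow none 0)).det +
      (coalescence (A.updateRow none 0) B).det := by
  let G := coalescence A B
  let a := coalescence A (B.updateRow none 0) none
  let b := coalescence (A.updateRow none 0) B none
  have row_none : G none = a + b := by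
    ext (_ | _ | _) <;> simp [G, a, b, coalescence]
  have updateRow_a : G.updateRow none a = coalescence A (B.updateRow none 0) := by
    ext (_ | _ | _) (_ | _ | _) <;> simp [G, a, coalescence]
  have updateRow_b : G.updateRow none b = coalescence (A.updateRow none 0) B := by
    ext (_ | _ | _) (_ | _ | _) <;> simp [G, b, coalescence]
  calc G.det = (G.updateRow none (a + b)).det := by rw [← row_none, updateRow_eq_self]
    _ = _ := by rw [det_updateRow_add, updateRow_a, updateRow_b]

theorem det_coalescence (A : Matrix (Option m) (Option m) R)
    (B : Matrix (Option n) (Option n) R) :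
    (coalescence A B).det =
      A.det * (B.submatrix some some).det + (A.submatrix some some).det * B.det := by
  rw [det_coalescence_eq_add_updateRow_none_zero, det_coalescence_updateRow_none_zero,
    det_coalescence_comm (A.updateRow none 0), det_coalescence_updateRow_none_zero, mul_comm B.det]

theorem det_coalescence_submatrix_some (A : Matrix (Option m) (Option m) R)
    (B : Matrix (Option n) (Option n) R) :
    ((coalescence A B).submatrix some some).det =
      (A.submatrix some some).det * (B.submatrix some some).det := by
  rw [coalescence_submatrix_some, det_fromBlocks_zero₁₂]

end Coalescence

section RootedChain

variable {R : Type*} [CommRing R] (c : R) (L : List R)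

/-- The tridiagonal matrix of the chain `c :: L`, rooted at the vertex carrying `c`. -/
def rootedTriMat : Matrix (Option (Fin L.length)) (Option (Fin L.length)) R :=
  reindex (finSuccEquiv L.length) (finSuccEquiv L.length) (triMat (c :: L))

theorem det_rootedTriMat : (rootedTriMat c L).det = tridet (c :: L) :=
  det_reindex_self (finSuccEquiv L.length) (triMat (c :: L))

theorem rootedTriMat_none_none : rootedTriMat c L none none = c := rfl

theorem rootedTriMat_none_some (j : Fin L.length) :
    rootedTriMat c L none (some j) = if (j : ℕ) = 0 then -1 else 0 := by
  simp [rootedTriMat, triMat, eq_comm]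

theorem rootedTriMat_some_none (i : Fin L.length) :
    rootedTriMat c L (some i) none = if (i : ℕ) = 0 then -1 else 0 := by
  simp [rootedTriMat, triMat, eq_comm]

theorem rootedTriMat_some_some (i j : Fin L.length) :
    rootedTriMat c L (some i) (some j) = triMat L i j := by
  simp [rootedTriMat, triMat]

theorem rootedTriMat_submatrix_some : (rootedTriMat c L).submatrix some some = triMat L := by
  ext i j
  exact rootedTriMat_some_some c L i j

end RootedChain

section Graft

variable {R V : Type*} [DecidableEq V]

/-- The index equivalence exhibiting `graftTwoChains` as an iterated coalescence: the chains indexed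
by `n` and `m` are glued, in this order, to `V` rooted at `v`. -/
def graftEquiv (v : V) (m n : Type*) : Option (({w // w ≠ v} ⊕ n) ⊕ m) ≃ m ⊕ V ⊕ n :=
  (optionSumEquiv ({w // w ≠ v} ⊕ n) m).trans <|
    (Equiv.sumCongr ((optionSumEquiv {w // w ≠ v} n).trans <|
      Equiv.sumCongr (Equiv.optionSubtypeNe v) (Equiv.refl n)) (Equiv.refl m)).trans <|
    Equiv.sumComm (V ⊕ n) m

theorem graftTwoChains_submatrix_graftEquiv [CommRing R] (A : Matrix V V R) (v : V)
    (c : R) (L : List R) (c' : R) (L' : List R) :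
    (graftTwoChains A v c L c' L').submatrix (graftEquiv v (Fin L.length) (Fin L'.length))
        (graftEquiv v (Fin L.length) (Fin L'.length)) =
      coalescence
        (coalescence (A.submatrix (Equiv.optionSubtypeNe v) (Equiv.optionSubtypeNe v))
          (rootedTriMat c' L'))
        (rootedTriMat c L) := by
  ext (_ | (⟨w, hw⟩ | _) | _) (_ | (⟨w', hw'⟩ | _) | _) <;>
    simp [graftTwoChains, graftEquiv, optionSumEquiv, coalescence, rootedTriMat_none_none,
      rootedTriMat_none_some, rootedTriMat_some_none, rootedTriMat_some_some, triMat,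
      add_right_comm, *]

end Graft

/-- The two-hair case of the hairy-graph determinant theorem:
`det G = |c₂,…,c_k|·|c′₂,…,c′_l|·det A
  + (|c₁,…,c_k|·|c′₂,…,c′_l| + |c′₁,…,c′_l|·|c₂,…,c_k|)·det (A ∖ v)`. -/
theorem det_graft_two_chains {R : Type*} [CommRing R] {V : Type*}
    [Fintype V] [DecidableEq V]
    (A : Matrix V V R) (v : V) (c₁ : R) (rest : List R) (c₁' : R) (rest' : List R) :
    (graftTwoChains A v c₁ rest c₁' rest').det
      = tridet rest * tridet rest' * A.det
        + (tridet (c₁ :: rest) * tridet rest' + tridet (c₁' :: rest') * tridet rest) *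
          (A.submatrix (fun i : {w : V // w ≠ v} => (i : V))
            (fun i : {w : V // w ≠ v} => (i : V))).det := by
  let e := Equiv.optionSubtypeNe v
  let A₀ := A.submatrix e e
  let B := rootedTriMat c₁ rest
  let B' := rootedTriMat c₁' rest'
  have det_A₀ : A₀.det = A.det := det_submatrix_equiv_self e A
  have A₀_submatrix_some : A₀.submatrix some some = A.submatrix Subtype.val Subtype.val := rfl
  calc (graftTwoChains A v c₁ rest c₁' rest').det
    _ = (coalescence (coalescence A₀ B') B).det := by
      rw [← graftTwoChains_submatrix_graftEquiv, det_submatrix_equiv_self]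
    _ = (A.det * tridet rest' + (A₀.submatrix some some).det * tridet (c₁' :: rest')) * tridet rest
        + (A₀.submatrix some some).det * tridet rest' * tridet (c₁ :: rest) := by
      simp only [det_coalescence, det_coalescence_submatrix_some, det_A₀, B, B', det_rootedTriMat,
        rootedTriMat_submatrix_some, tridet]
    _ = _ := by
      rw [A₀_submatrix_some]
      ring
end
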